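/- Let ψ : ℝ → [0,∞) be a sublinear potential satisfying (A5'), let μ ∈ M(ℝ^d), let ρ ∈ C_c^∞(ℝ^d) be nonnegative with support in the unit ball, ∫ρ dx = 1 and ρ(x) = ρ(−x), and for δ > 0 set ρ_δ(x) = δ^{−d} ρ(x/δ). Then for every δ > 0: ∫_{ℝ^d} ψ((ρ_δ ∗ μ)(x)) dx ≤ sup { ∫_{ℝ^d} v dμ − ∫_{ℝ^d} ψ*(v) dx : v ∈ C_c(ℝ^d), ψ*∘v ∈ L¹(ℝ^d) }, where (ρ_δ ∗ μ)(x) = ∫_{ℝ^d} ρ_δ(x − y) dμ(y). -/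

import Mathlib

open scoped ENNReal
open MeasureTheory

/-- The convex conjugate `f*(x) = sup_{y ∈ ℝ} (x·y − f(y))`, taking values in `[0,∞]`. -/
noncomputable def convexConj (f : ℝ → ℝ) (x : ℝ) : ℝ≥0∞ :=
  ⨆ y : ℝ, ENNReal.ofReal (x * y - f y)

/-- Integral of a real function against a finite signed Radon measure. -/
noncomputable def sintegral {α : Type*} [MeasurableSpace α]
    (μ : MeasureTheory.SignedMeasure α) (v : α → ℝ) : ℝ :=
  ∫ x, v x ∂μ.toJordanDecomposition.posPart - ∫ x, v x ∂μ.toJordanDecomposition.negPart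

section Helpers

lemma aux_chord_right {ψ : ℝ → ℝ} (hconv : ConvexOn ℝ Set.univ ψ) {a b z : ℝ} (hab : a < b)
    (hz : b ≤ z) : ψ a + (ψ b - ψ a) / (b - a) * (z - a) ≤ ψ z := by
  have h := hconv.secant_mono (a := a) (x := b) (y := z) trivial trivial trivial
    (by linarith) (by linarith) hz
  rw [le_div_iff₀ (by linarith)] at h
  linarith

lemma aux_chord_left {ψ : ℝ → ℝ} (hconv : ConvexOn ℝ Set.univ ψ) {a b z : ℝ} (hab : a < b)
    (hz : z ≤ a) : ψ a + (ψ b - ψ a) / (b - a) * (z - a) ≤ ψ z := by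
  rcases hz.eq_or_lt with rfl | hz
  · simp
  have h := hconv.slope_mono_adjacent (x := z) (y := a) (z := b) trivial trivial hz hab
  rw [div_le_iff₀ (by linarith)] at h
  linarith

lemma aux_lip {ψ : ℝ → ℝ} (hconv : ConvexOn ℝ Set.univ ψ) (hnonneg : ∀ x, 0 ≤ ψ x)
    {C : ℝ} (hC : ∀ x : ℝ, ψ x ≤ C * (1 + |x|)) {a b : ℝ} (hab : a < b) :
    ψ b - ψ a ≤ C * (b - a) := by
  by_contra! hlt
  set m := (ψ b - ψ a) / (b - a) with hm
  have hmC : C < m := by rw [hm, lt_div_iff₀ (by linarith)]; exact hlt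
  set z := max (max b 0) ((C + m * a - ψ a) / (m - C) + 1) with hz
  have h1 : b ≤ z := (le_max_left _ _).trans (le_max_left _ _)
  have h2 : 0 ≤ z := (le_max_right _ _).trans (le_max_left _ _)
  have h3 : (C + m * a - ψ a) / (m - C) < z := by
    have := le_max_right (max b 0) ((C + m * a - ψ a) / (m - C) + 1)
    rw [← hz] at this; linarith
  rw [div_lt_iff₀ (by linarith)] at h3
  have h4 := aux_chord_right hconv hab h1
  have h5 := hC z
  rw [abs_of_nonneg h2] at h5
  rw [← hm] at h4
  nlinarith

lemma aux_lip' {ψ : ℝ → ℝ} (hconv : ConvexOn ℝ Set.univ ψ) (hnonneg : ∀ x, 0 ≤ ψ x)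
    (hsymm : ∀ x, ψ x = ψ (-x))
    {C : ℝ} (hC : ∀ x : ℝ, ψ x ≤ C * (1 + |x|)) {a b : ℝ} (hab : a < b) :
    ψ a - ψ b ≤ C * (b - a) := by
  have := aux_lip hconv hnonneg hC (a := -b) (b := -a) (by linarith)
  rw [← hsymm, ← hsymm] at this
  linarith

lemma aux_core {ψ : ℝ → ℝ} (hconv : ConvexOn ℝ Set.univ ψ) (hnonneg : ∀ x, 0 ≤ ψ x)
    (hsymm : ∀ x, ψ x = ψ (-x))
    {C : ℝ} (hC0 : 0 < C) (hC : ∀ x : ℝ, ψ x ≤ C * (1 + |x|)) {h : ℝ} (hh : 0 < h) (y z : ℝ) :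
    (ψ (y + h) - ψ y) / h * z - ψ z ≤ (ψ (y + h) - ψ y) / h * y - ψ y + 2 * C * h := by
  have hp : 0 < C * h := by positivity
  have hl := aux_chord_left hconv (a := y) (b := y + h) (z := z) (by linarith)
  have hr := aux_chord_right hconv (a := y) (b := y + h) (z := z) (by linarith)
  rw [add_sub_cancel_left] at hl hr
  set s := (ψ (y + h) - ψ y) / h with hs
  rcases le_or_gt z y with h1 | h1
  · have := hl h1; linarith
  rcases le_or_gt (y + h) z with h2 | h2
  · have := hr h2; linarith
  have hsC : s ≤ C := by
    rw [hs, div_le_iff₀ hh]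
    have := aux_lip hconv hnonneg hC (a := y) (b := y + h) (by linarith)
    linarith
  have h3 := aux_lip' hconv hnonneg hsymm hC h1
  have h4 : s * (z - y) ≤ C * (z - y) := mul_le_mul_of_nonneg_right hsC (by linarith)
  have h5 : C * (z - y) ≤ C * h := mul_le_mul_of_nonneg_left (by linarith) hC0.le
  linarith

lemma aux_cont {ψ : ℝ → ℝ} (hconv : ConvexOn ℝ Set.univ ψ) : Continuous ψ := by
  have := hconv.continuousOn isOpen_univ
  exact continuousOn_univ.mp this

lemma aux_conj_le {ψ : ℝ → ℝ} (hconv : ConvexOn ℝ Set.univ ψ) (hnonneg : ∀ x, 0 ≤ ψ x)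
    (hsymm : ∀ x, ψ x = ψ (-x))
    {C : ℝ} (hC0 : 0 < C) (hC : ∀ x : ℝ, ψ x ≤ C * (1 + |x|)) {h : ℝ} (hh : 0 < h) (y c : ℝ)
    (hc0 : 0 ≤ c) (hc1 : c ≤ 1) :
    convexConj ψ (c * ((ψ (y + h) - ψ y) / h)) ≤
      ENNReal.ofReal (c * ((ψ (y + h) - ψ y) / h * y - ψ y + 2 * C * h)) := by
  refine iSup_le fun z => ENNReal.ofReal_le_ofReal ?_
  have h1 := aux_core hconv hnonneg hsymm hC0 hC hh y z
  have h2 := mul_le_mul_of_nonneg_left h1 hc0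
  have h3 : c * ψ z ≤ ψ z := mul_le_of_le_one_left (hnonneg z) hc1
  linarith

lemma aux_conj_meas (ψ : ℝ → ℝ) : Measurable (convexConj ψ) := by
  refine LowerSemicontinuous.measurable ?_
  refine lowerSemicontinuous_iSup fun y => Continuous.lowerSemicontinuous ?_
  exact ENNReal.continuous_ofReal.comp (by fun_prop)

variable {E : Type*} [NormedAddCommGroup E] [InnerProductSpace ℝ E] [FiniteDimensional ℝ E]
  [MeasurableSpace E] [BorelSpace E]

/-- Jensen. -/
lemma aux_jensen (ψ : ℝ → ℝ) {k w : E → ℝ} (hk : Continuous k) (hkc : HasCompactSupport k)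
    (hk0 : ∀ x, 0 ≤ k x) (hk1 : ∫ x, k x = 1) (hw : Continuous w) :
    (∫⁻ x, convexConj ψ (∫ t, k (x - t) * w t)) ≤ ∫⁻ x, convexConj ψ (w x) := by
  have hki : Integrable k := hk.integrable_of_hasCompactSupport hkc
  have hcs : ∀ x, HasCompactSupport (fun t => k (x - t)) := fun x =>
    hkc.comp_homeomorph (Homeomorph.subLeft x)
  have hci : ∀ x, Continuous (fun t => k (x - t)) := fun x => by fun_prop
  have hpt : ∀ x, convexConj ψ (∫ t, k (x - t) * w t) ≤
      ∫⁻ t, ENNReal.ofReal (k (x - t)) * convexConj ψ (w t) := by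
    intro x
    refine iSup_le fun z => ?_
    have hi1 : Integrable (fun t => k (x - t) * w t) :=
      ((hci x).mul hw).integrable_of_hasCompactSupport (hcs x).mul_right
    have hi2 : Integrable (fun t => k (x - t)) :=
      (hci x).integrable_of_hasCompactSupport (hcs x)
    have heq : (∫ t, k (x - t) * w t) * z - ψ z = ∫ t, k (x - t) * (w t * z - ψ z) := by
      have : ∀ t, k (x - t) * (w t * z - ψ z) = k (x - t) * w t * z - k (x - t) * ψ z := by
        intro t; ring
      simp_rw [this]
      rw [integral_sub (hi1.mul_const _) (hi2.mul_const _), integral_mul_const,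
        integral_mul_const, integral_sub_left_eq_self k volume x, hk1, one_mul]
    rw [heq]
    have hi3 : Integrable (fun t => k (x - t) * max (w t * z - ψ z) 0) :=
      Continuous.integrable_of_hasCompactSupport (by fun_prop) (hcs x).mul_right
    have hi4 : Integrable (fun t => k (x - t) * (w t * z - ψ z)) :=
      Continuous.integrable_of_hasCompactSupport (by fun_prop) (hcs x).mul_right
    calc ENNReal.ofReal (∫ t, k (x - t) * (w t * z - ψ z))
        ≤ ENNReal.ofReal (∫ t, k (x - t) * max (w t * z - ψ z) 0) :=
          ENNReal.ofReal_le_ofReal (integral_mono hi4 hi3 fun t =>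
            mul_le_mul_of_nonneg_left (le_max_left _ _) (hk0 _))
      _ = ∫⁻ t, ENNReal.ofReal (k (x - t) * max (w t * z - ψ z) 0) :=
          ofReal_integral_eq_lintegral_ofReal hi3
            (Filter.Eventually.of_forall fun t => mul_nonneg (hk0 _) (le_max_right _ _))
      _ ≤ _ := by
          refine lintegral_mono fun t => ?_
          dsimp only
          rw [ENNReal.ofReal_mul (hk0 _)]
          gcongr
          refine le_trans ?_ (le_iSup (fun z => ENNReal.ofReal (w t * z - ψ z)) z)
          simp
  refine (lintegral_mono hpt).trans ?_
  rw [lintegral_lintegral_swap]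
  · refine lintegral_mono fun t => ?_
    dsimp only
    rw [lintegral_mul_const _ (by fun_prop), lintegral_sub_right_eq_self
      (fun x => ENNReal.ofReal (k x)) t, ← ofReal_integral_eq_lintegral_ofReal hki
      (Filter.Eventually.of_forall hk0), hk1]
    simp
  · refine Measurable.aemeasurable ?_
    refine Measurable.mul ?_ ?_
    · have : Continuous (fun p : E × E => ENNReal.ofReal (k (p.1 - p.2))) :=
        ENNReal.continuous_ofReal.comp (by fun_prop)
      exact this.measurable
    · exact (aux_conj_meas ψ).comp (hw.measurable.comp measurable_snd)

lemma aux_fubini (ν : Measure E) [IsFiniteMeasure ν] {k w : E → ℝ} (hk : Continuous k)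
    (hkc : HasCompactSupport k) (hke : ∀ x, k x = k (-x))
    (hw : Continuous w) (hwc : HasCompactSupport w) :
    ∫ x, (∫ t, k (x - t) * w t) ∂ν = ∫ t, w t * ∫ x, k (t - x) ∂ν := by
  obtain ⟨B, hB⟩ := hkc.exists_bound_of_continuous hk
  rw [integral_integral_swap]
  · refine integral_congr_ae (Filter.Eventually.of_forall fun t => ?_)
    dsimp only
    rw [integral_mul_const, mul_comm]
    congr 1
    refine integral_congr_ae (Filter.Eventually.of_forall fun x => ?_)
    dsimp only
    rw [hke, neg_sub]
  · have hwi : Integrable w := hw.integrable_of_hasCompactSupport hwc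
    have h1 : Integrable (fun p : E × E => w p.2) (ν.prod volume) := by
      simpa using (integrable_const (1:ℝ) (μ := ν)).mul_prod hwi
    exact h1.bdd_mul (c := B) (f := fun p : E × E => k (p.1 - p.2))
      (by fun_prop : Continuous fun p : E × E => k (p.1 - p.2)).aestronglyMeasurable
      (Filter.Eventually.of_forall fun p => hB _)

lemma aux_conv_cont (ν : Measure E) [IsFiniteMeasure ν] {k : E → ℝ} (hk : Continuous k)
    (hkc : HasCompactSupport k) : Continuous (fun t => ∫ x, k (t - x) ∂ν) := by
  obtain ⟨B, hB⟩ := hkc.exists_bound_of_continuous hk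
  refine continuous_of_dominated (bound := fun _ => B) ?_ ?_ (integrable_const _) ?_
  · intro t
    exact (by fun_prop : Continuous fun x => k (t - x)).aestronglyMeasurable
  · exact fun t => Filter.Eventually.of_forall fun x => hB _
  · exact Filter.Eventually.of_forall fun x => by fun_prop

lemma aux_sintegral (μ : SignedMeasure E) {k w : E → ℝ} (hk : Continuous k)
    (hkc : HasCompactSupport k) (hke : ∀ x, k x = k (-x))
    (hw : Continuous w) (hwc : HasCompactSupport w) :
    sintegral μ (fun x => ∫ t, k (x - t) * w t) =
      ∫ t, w t * sintegral μ (fun z => k (t - z)) := by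
  unfold sintegral
  rw [aux_fubini _ hk hkc hke hw hwc, aux_fubini _ hk hkc hke hw hwc, ← integral_sub]
  · simp_rw [mul_sub]
  · exact (hw.mul (aux_conv_cont _ hk hkc)).integrable_of_hasCompactSupport hwc.mul_right
  · exact (hw.mul (aux_conv_cont _ hk hkc)).integrable_of_hasCompactSupport hwc.mul_right

lemma aux_step {ψ : ℝ → ℝ} (μ : SignedMeasure E) {k w : E → ℝ} (hk : Continuous k)
    (hkc : HasCompactSupport k) (hke : ∀ x, k x = k (-x))
    (hk0 : ∀ x, 0 ≤ k x) (hk1 : ∫ x, k x = 1)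
    (hw : Continuous w) (hwc : HasCompactSupport w) (hwf : (∫⁻ x, convexConj ψ (w x)) ≠ ⊤) :
    ENNReal.ofReal ((∫ t, w t * sintegral μ (fun z => k (t - z))) -
        (∫⁻ x, convexConj ψ (w x)).toReal) ≤
      ⨆ v : {v : E → ℝ //
            Continuous v ∧ HasCompactSupport v ∧ (∫⁻ x, convexConj ψ (v x)) ≠ ⊤},
          ENNReal.ofReal (sintegral μ v.1 - (∫⁻ x, convexConj ψ (v.1 x)).toReal) := by
  have hJ := aux_jensen ψ hk hkc hk0 hk1 hw
  have hconv : (fun x => ∫ t, k (x - t) * w t) =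
      convolution k w (ContinuousLinearMap.lsmul ℝ ℝ) volume := by
    funext x
    rw [convolution_lsmul_swap]
    simp
  have hvc : Continuous (fun x => ∫ t, k (x - t) * w t) := by
    rw [hconv]
    exact hkc.continuous_convolution_left _ hk hw.locallyIntegrable
  have hvs : HasCompactSupport (fun x => ∫ t, k (x - t) * w t) := by
    rw [hconv]
    exact HasCompactSupport.convolution _ hkc hwc
  refine le_trans ?_ (le_iSup _ ⟨fun x => ∫ t, k (x - t) * w t, hvc, hvs,
    ne_top_of_le_ne_top hwf hJ⟩)
  dsimp only
  rw [aux_sintegral μ hk hkc hke hw hwc]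
  refine ENNReal.ofReal_le_ofReal ?_
  have := ENNReal.toReal_mono hwf hJ
  linarith

lemma aux_cutoff {ψ : ℝ → ℝ} (hconv : ConvexOn ℝ Set.univ ψ) (hnonneg : ∀ x, 0 ≤ ψ x)
    (h0 : ψ 0 = 0) (hsymm : ∀ x, ψ x = ψ (-x))
    {C : ℝ} (hC0 : 0 < C) (hC : ∀ x : ℝ, ψ x ≤ C * (1 + |x|))
    (μ : SignedMeasure E) {k χ : E → ℝ} (hk : Continuous k)
    (hkc : HasCompactSupport k) (hke : ∀ x, k x = k (-x))
    (hk0 : ∀ x, 0 ≤ k x) (hk1 : ∫ x, k x = 1)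
    (hχ : Continuous χ) (hχc : HasCompactSupport χ) (hχ0 : ∀ x, 0 ≤ χ x) (hχ1 : ∀ x, χ x ≤ 1) :
    (∫⁻ x, ENNReal.ofReal (χ x * ψ (sintegral μ (fun z => k (x - z))))) ≤
      ⨆ v : {v : E → ℝ //
            Continuous v ∧ HasCompactSupport v ∧ (∫⁻ x, convexConj ψ (v x)) ≠ ⊤},
          ENNReal.ofReal (sintegral μ v.1 - (∫⁻ x, convexConj ψ (v.1 x)).toReal) := by
  have hψ := aux_cont hconv
  set g : E → ℝ := fun x => sintegral μ (fun z => k (x - z)) with hg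
  have hgc : Continuous g := (aux_conv_cont _ hk hkc).sub (aux_conv_cont _ hk hkc)
  set S := ⨆ v : {v : E → ℝ //
            Continuous v ∧ HasCompactSupport v ∧ (∫⁻ x, convexConj ψ (v x)) ≠ ⊤},
          ENNReal.ofReal (sintegral μ v.1 - (∫⁻ x, convexConj ψ (v.1 x)).toReal) with hS
  have hI : Integrable (fun x => χ x * ψ (g x)) :=
    (hχ.mul (hψ.comp hgc)).integrable_of_hasCompactSupport hχc.mul_right
  have hχi : Integrable χ := hχ.integrable_of_hasCompactSupport hχc
  change (∫⁻ x, ENNReal.ofReal (χ x * ψ (g x))) ≤ S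
  rw [← ofReal_integral_eq_lintegral_ofReal hI
    (Filter.Eventually.of_forall fun x => mul_nonneg (hχ0 x) (hnonneg _))]
  have key : ∀ h : ℝ, 0 < h →
      ENNReal.ofReal ((∫ x, χ x * ψ (g x)) - 2 * C * h * ∫ x, χ x) ≤ S := by
    intro h hh
    set s : E → ℝ := fun x => (ψ (g x + h) - ψ (g x)) / h with hs
    have hsc : Continuous s := by
      have h1 : Continuous fun x => ψ (g x + h) := hψ.comp (by fun_prop)
      have h2 : Continuous fun x => ψ (g x) := hψ.comp hgc
      exact (h1.sub h2).div_const h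
    have hwc : Continuous (fun x => χ x * s x) := hχ.mul hsc
    have hws : HasCompactSupport (fun x => χ x * s x) := hχc.mul_right
    have hψg : Continuous fun x => ψ (g x) := hψ.comp hgc
    have hbi : Integrable (fun x => χ x * (s x * g x - ψ (g x) + 2 * C * h)) :=
      Continuous.integrable_of_hasCompactSupport (by fun_prop) hχc.mul_right
    have hb0 : ∀ x, 0 ≤ χ x * (s x * g x - ψ (g x) + 2 * C * h) := by
      intro x
      refine mul_nonneg (hχ0 x) ?_
      have := aux_core hconv hnonneg hsymm hC0 hC hh (g x) 0
      rw [h0] at this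
      simpa using this
    have hle : (∫⁻ x, convexConj ψ (χ x * s x)) ≤
        ENNReal.ofReal (∫ x, χ x * (s x * g x - ψ (g x) + 2 * C * h)) := by
      rw [ofReal_integral_eq_lintegral_ofReal hbi (Filter.Eventually.of_forall hb0)]
      exact lintegral_mono fun x =>
        aux_conj_le hconv hnonneg hsymm hC0 hC hh (g x) (χ x) (hχ0 x) (hχ1 x)
    have hfin : (∫⁻ x, convexConj ψ (χ x * s x)) ≠ ⊤ :=
      ne_top_of_le_ne_top ENNReal.ofReal_ne_top hle
    refine le_trans (ENNReal.ofReal_le_ofReal ?_)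
      (aux_step μ hk hkc hke hk0 hk1 hwc hws hfin)
    have h1 := ENNReal.toReal_mono ENNReal.ofReal_ne_top hle
    rw [ENNReal.toReal_ofReal (integral_nonneg hb0)] at h1
    have hwg : Integrable (fun x => χ x * s x * g x) :=
      (hwc.mul hgc).integrable_of_hasCompactSupport hws.mul_right
    have h2 : (∫ x, χ x * (s x * g x - ψ (g x) + 2 * C * h)) =
        (∫ x, χ x * s x * g x) - (∫ x, χ x * ψ (g x)) + 2 * C * h * ∫ x, χ x := by
      rw [← integral_const_mul, ← integral_sub hwg hI, ← integral_add
        (f := fun x => χ x * s x * g x - χ x * ψ (g x)) (hwg.sub hI) (hχi.const_mul _)]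
      congr 1
      funext x
      ring
    change _ ≤ (∫ t, χ t * s t * g t) - _
    linarith
  have hlim : Filter.Tendsto
      (fun h : ℝ => ENNReal.ofReal ((∫ x, χ x * ψ (g x)) - 2 * C * h * ∫ x, χ x))
      (nhdsWithin 0 (Set.Ioi 0)) (nhds (ENNReal.ofReal (∫ x, χ x * ψ (g x)))) := by
    have hc : Continuous
        (fun h : ℝ => ENNReal.ofReal ((∫ x, χ x * ψ (g x)) - 2 * C * h * ∫ x, χ x)) :=
      ENNReal.continuous_ofReal.comp (by fun_prop)
    have := (hc.tendsto 0).mono_left (nhdsWithin_le_nhds (s := Set.Ioi 0))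
    simpa using this
  exact le_of_tendsto hlim (Filter.eventually_of_mem self_mem_nhdsWithin fun h hh => key h hh)

lemma aux_main {ψ : ℝ → ℝ} (hconv : ConvexOn ℝ Set.univ ψ) (hnonneg : ∀ x, 0 ≤ ψ x)
    (h0 : ψ 0 = 0) (hsymm : ∀ x, ψ x = ψ (-x))
    {C : ℝ} (hC0 : 0 < C) (hC : ∀ x : ℝ, ψ x ≤ C * (1 + |x|))
    (μ : SignedMeasure E) {k : E → ℝ} (hk : Continuous k)
    (hkc : HasCompactSupport k) (hke : ∀ x, k x = k (-x))
    (hk0 : ∀ x, 0 ≤ k x) (hk1 : ∫ x, k x = 1) :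
    (∫⁻ x, ENNReal.ofReal (ψ (sintegral μ (fun z => k (x - z))))) ≤
      ⨆ v : {v : E → ℝ //
            Continuous v ∧ HasCompactSupport v ∧ (∫⁻ x, convexConj ψ (v x)) ≠ ⊤},
          ENNReal.ofReal (sintegral μ v.1 - (∫⁻ x, convexConj ψ (v.1 x)).toReal) := by
  have hψ := aux_cont hconv
  set g : E → ℝ := fun x => sintegral μ (fun z => k (x - z)) with hg
  have hgc : Continuous g := (aux_conv_cont _ hk hkc).sub (aux_conv_cont _ hk hkc)
  have hψg : Continuous fun x => ψ (g x) := hψ.comp hgc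
  let χ : ℕ → E → ℝ := fun n x => max 0 (min 1 ((n : ℝ) + 1 - ‖x‖))
  have hχ : ∀ n, Continuous (χ n) := fun n => by fun_prop
  have hχ0 : ∀ n x, 0 ≤ χ n x := fun n x => le_max_left _ _
  have hχ1 : ∀ n x, χ n x ≤ 1 := fun n x => max_le zero_le_one (min_le_left _ _)
  have hχc : ∀ n, HasCompactSupport (χ n) := fun n => by
    refine HasCompactSupport.intro (isCompact_closedBall (0 : E) (n + 1)) fun x hx => ?_
    have hx' : (n : ℝ) + 1 < ‖x‖ := by simpa using hx
    exact max_eq_left ((min_le_right _ _).trans (by linarith))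
  have hsup : ∀ x, ENNReal.ofReal (ψ (g x)) = ⨆ n, ENNReal.ofReal (χ n x * ψ (g x)) := by
    intro x
    apply le_antisymm
    · obtain ⟨n, hn⟩ := exists_nat_ge ‖x‖
      refine le_trans (le_of_eq ?_) (le_iSup _ n)
      have : χ n x = 1 := by
        have h1 : min 1 ((n : ℝ) + 1 - ‖x‖) = 1 := min_eq_left (by linarith)
        simp only [χ, h1]
        norm_num
      rw [this, one_mul]
    · exact iSup_le fun n => ENNReal.ofReal_le_ofReal
        (mul_le_of_le_one_left (hnonneg _) (hχ1 n x))
  change (∫⁻ x, ENNReal.ofReal (ψ (g x))) ≤ _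
  simp_rw [hsup]
  rw [lintegral_iSup]
  · exact iSup_le fun n => aux_cutoff hconv hnonneg h0 hsymm hC0 hC μ hk hkc hke hk0 hk1
      (hχ n) (hχc n) (hχ0 n) (hχ1 n)
  · intro n
    have := hχ n
    exact (ENNReal.continuous_ofReal.comp (this.mul hψg)).measurable
  · intro m n hmn x
    refine ENNReal.ofReal_le_ofReal (mul_le_mul_of_nonneg_right ?_ (hnonneg _))
    have : (m : ℝ) ≤ n := by exact_mod_cast hmn
    exact max_le_max le_rfl (min_le_min le_rfl (by linarith))

end Helpers

/-- Let `ψ` be a sublinear potential satisfying (A5'),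
`μ ∈ M(ℝ^d)` and `ρ ∈ C_c^∞(ℝ^d)` a nonnegative even mollifier supported in the
unit ball with `∫ ρ = 1`; set `ρ_δ(x) = δ^{-d} ρ(x/δ)`. Then for every `δ > 0`,
`∫_{ℝ^d} ψ((ρ_δ ∗ μ)(x)) dx ≤ sup { ∫ v dμ − ∫ ψ*(v) dx : v ∈ C_c(ℝ^d), ψ*∘v ∈ L¹ }`. -/
theorem mollified_energy_le (d : ℕ) (ψ : ℝ → ℝ)
    (hconv : ConvexOn ℝ Set.univ ψ) (hlsc : LowerSemicontinuous ψ)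
    (hnonneg : ∀ x, 0 ≤ ψ x) (h0 : ψ 0 = 0) (hsymm : ∀ x, ψ x = ψ (-x))
    (hsub : ∃ C > 0, ∀ x : ℝ, ψ x ≤ C * (1 + |x|))
    (hA5' : ∃ y > (0 : ℝ), 0 < ψ y)
    (μ : MeasureTheory.SignedMeasure (EuclideanSpace ℝ (Fin d)))
    (ρ : EuclideanSpace ℝ (Fin d) → ℝ)
    (hρsmooth : ContDiff ℝ (⊤ : ℕ∞) ρ) (hρsupp : HasCompactSupport ρ)
    (hρball : tsupport ρ ⊆ Metric.ball 0 1)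
    (hρnonneg : ∀ x, 0 ≤ ρ x) (hρint : ∫ x, ρ x = 1)
    (hρeven : ∀ x, ρ x = ρ (-x))
    (δ : ℝ) (hδ : 0 < δ) :
    (∫⁻ x, ENNReal.ofReal
        (ψ ((δ ^ d)⁻¹ * sintegral μ (fun z => ρ (δ⁻¹ • (x - z))))))
      ≤ ⨆ v : {v : EuclideanSpace ℝ (Fin d) → ℝ //
            Continuous v ∧ HasCompactSupport v ∧ (∫⁻ x, convexConj ψ (v x)) ≠ ⊤},
          ENNReal.ofReal (sintegral μ v.1 - (∫⁻ x, convexConj ψ (v.1 x)).toReal) := by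
  obtain ⟨C, hC0, hC⟩ := hsub
  have hδd : 0 < δ ^ d := by positivity
  have hρc : Continuous ρ := hρsmooth.continuous
  have hmain := aux_main hconv hnonneg h0 hsymm hC0 hC μ
    (k := fun x => (δ ^ d)⁻¹ * ρ (δ⁻¹ • x)) (by fun_prop)
    (HasCompactSupport.mul_left (hρsupp.comp_smul (inv_ne_zero hδ.ne')))
    (fun x => by rw [smul_neg, ← hρeven])
    (fun x => mul_nonneg (by positivity) (hρnonneg _))
    (by
      rw [integral_const_mul, Measure.integral_comp_inv_smul, hρint, finrank_euclideanSpace_fin,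
        abs_of_pos hδd, smul_eq_mul, mul_one, inv_mul_cancel₀ hδd.ne'])
  refine le_trans (le_of_eq ?_) hmain
  refine lintegral_congr fun x => ?_
  congr 2
  unfold sintegral
  rw [integral_const_mul, integral_const_mul, mul_sub]
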